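/- Let r ≥ 2 be an integer, let 0 ≤ δ ≤ 1/(2(r+1)), and let G be a graph on n vertices with at least (1−δ)·C(n,2) edges. Then in every r-colouring of the edges of G there is a monochromatic matching of size at least ⌊(1/(r+1) − δ)·n⌋. -/

import Mathlib

def IsM {V : Type*} (H : SimpleGraph V) (A : Finset V) (f : V → V) : Prop :=
  (∀ x, f (f x) = x) ∧ ∀ x, f x ≠ x → H.Adj x (f x) ∧ x ∉ A

open Classical in
noncomputable def msupp {V : Type*} [Fintype V] (f : V → V) : Finset V :=
  Finset.univ.filter (fun x => f x ≠ x)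

open Classical in
theorem msupp_even {V : Type*} [Fintype V] (f : V → V) (hf : ∀ x, f (f x) = x) :
    2 ∣ (msupp f).card := by
  have h := Equiv.Perm.two_dvd_card_support (σ := Function.Involutive.toPerm f hf) (by
    ext x; rw [pow_two]; exact hf x)
  have e : (Function.Involutive.toPerm f hf).support = msupp f := by
    ext x; rw [Equiv.Perm.mem_support]; simp only [msupp, Finset.mem_filter, Finset.mem_univ, true_and]; rfl
  rwa [e] at h

open Classical in
theorem isM_add {V : Type*} [Fintype V] {H : SimpleGraph V} {A : Finset V} {f : V → V}
    (hf : IsM H A f) {x y : V} (hxy : H.Adj x y) (hx : x ∉ A) (hy : y ∉ A)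
    (fx : f x = x) (fy : f y = y) :
    ∃ g, IsM H A g ∧ (msupp f).card < (msupp g).card := by
  have hne := hxy.ne
  obtain ⟨h1, h2⟩ := hf
  refine ⟨fun p => if p = x then y else if p = y then x else f p, ⟨?_, ?_⟩, ?_⟩
  · intro p
    have := h1 p
    grind
  · intro p
    have := h1 p
    have := h2 p
    have := hxy.symm
    grind
  · apply Finset.card_lt_card
    rw [Finset.ssubset_iff_of_subset]
    · refine ⟨x, ?_, ?_⟩ <;> simp [msupp, fx, hne.symm]
    · intro p
      simp only [msupp, Finset.mem_filter, Finset.mem_univ, true_and]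
      grind

open Classical in
theorem gallai_step {V : Type*} [Fintype V] {H : SimpleGraph V} {A : Finset V} {k : ℕ}
    (hk : ∀ h, IsM H A h → (msupp h).card ≤ k) {g : V → V} (hg : IsM H A g)
    (gk : (msupp g).card = k) {u v w : V} (huw : u ≠ w) (gu : g u = u) (gw : g w = w)
    (hcov : ∀ h, IsM H A h → (msupp h).card = k → h v = v → h u ≠ u ∧ h w ≠ w) (m : ℕ) :
    ∀ f, IsM H A f → (msupp f).card = k → f v = v →
      Fintype.card V ≤ (Finset.univ.filter (fun p => f p = g p)).card + m → False := by
  induction m with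
  | zero =>
    intro f hf fk fv hc
    have : (Finset.univ.filter (fun p => f p = g p)) = Finset.univ := by
      apply Finset.eq_univ_of_card
      have := Finset.card_le_univ (Finset.univ.filter (fun p => f p = g p))
      omega
    have h := (hcov f hf fk fv).1
    have : u ∈ (Finset.univ.filter (fun p => f p = g p)) := by rw [this]; simp
    simp only [Finset.mem_filter, Finset.mem_univ, true_and] at this
    exact h (this.trans gu)
  | succ m ih =>
    intro f hf fk fv hc
    obtain ⟨fu, fw⟩ := hcov f hf fk fv
    -- find x
    have hx : ∃ x, x ≠ v ∧ f x = x ∧ g x ≠ x := by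
      by_contra hno
      push Not at hno
      have h1 : (msupp g \ msupp f).card ≤ 1 := by
        apply Finset.card_le_one.2
        intro a ha b hb
        simp only [msupp, Finset.mem_sdiff, Finset.mem_filter, Finset.mem_univ, true_and, not_not] at ha hb
        have := hno a
        have := hno b
        grind
      have h2 : 2 ≤ (msupp f \ msupp g).card := by
        rw [← Finset.card_pair huw]
        apply Finset.card_le_card
        intro a ha
        simp only [msupp, Finset.mem_sdiff, Finset.mem_filter, Finset.mem_univ, true_and, not_not]
        simp only [Finset.mem_insert, Finset.mem_singleton] at ha
        grind
      have h3 := Finset.card_sdiff_add_card_inter (msupp g) (msupp f)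
      have h4 := Finset.card_sdiff_add_card_inter (msupp f) (msupp g)
      rw [Finset.inter_comm] at h4
      omega
    obtain ⟨x, hxv, fx, gx⟩ := hx
    obtain ⟨y, hy⟩ : ∃ y, y = g x := ⟨_, rfl⟩
    have gy : g y = x := by rw [hy, hg.1]
    have hxy : H.Adj x y := by rw [hy]; exact (hg.2 x gx).1
    have hxA := (hg.2 x gx).2
    have hyA : y ∉ A := (hg.2 y (by rw [gy]; exact hxy.ne)).2
    have fy : f y ≠ y := by
      intro fy
      obtain ⟨h, hh, hlt⟩ := isM_add hf hxy hxA hyA fx fy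
      have := hk h hh
      omega
    obtain ⟨z, hz⟩ : ∃ z, z = f y := ⟨_, rfl⟩
    have fz : f z = y := by rw [hz, hf.1]
    have hne := hxy.ne
    have hzx : z ≠ x := by grind
    have hzy : z ≠ y := by grind
    obtain ⟨h1, h2⟩ := hf
    let f' : V → V := fun p => if p = x then y else if p = y then x else if p = z then z else f p
    have hf' : IsM H A f' := by
      refine ⟨?_, ?_⟩
      · intro p
        have := h1 p
        grind
      · intro p
        have := h1 p
        have := h2 p
        have := hxy.symm
        grind
    have hs : msupp f' = insert x ((msupp f).erase z) := by
      ext p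
      simp only [msupp, Finset.mem_filter, Finset.mem_univ, true_and, Finset.mem_insert, Finset.mem_erase]
      grind
    have hs' : (msupp f').card = k := by
      rw [hs, Finset.card_insert_of_notMem, Finset.card_erase_of_mem]
      · have : 0 < (msupp f).card := Finset.card_pos.2 ⟨z, by simp [msupp, fz, hzy.symm]⟩
        omega
      · simp [msupp, fz, hzy.symm]
      · simp [msupp, fx]
    refine ih f' hf' hs' (by grind) ?_
    have : (Finset.univ.filter (fun p => f p = g p)).card < (Finset.univ.filter (fun p => f' p = g p)).card := by
      apply Finset.card_lt_card
      rw [Finset.ssubset_iff_of_subset]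
      · refine ⟨x, ?_, ?_⟩
        · simp [f', hy]
        · simp only [Finset.mem_filter, Finset.mem_univ, true_and]; grind
      · intro p
        simp only [Finset.mem_filter, Finset.mem_univ, true_and]
        have := hg.1 p
        grind
    omega

open Classical in
theorem tutte_berge_weak {V : Type*} [Fintype V] (H : SimpleGraph V) (k : ℕ)
    (hk : ∀ f, IsM H ∅ f → (msupp f).card ≤ k) :
    ∃ A : Finset V, ∃ κ : V → V, (∀ x y, H.Adj x y → x ∉ A → y ∉ A → κ x = κ y) ∧
      2 * A.card + Fintype.card V ≤ k + (Finset.univ.image κ).card := by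
  -- choose A maximal
  let P : Finset V → Prop := fun A => ∀ f, IsM H A f → (msupp f).card + 2 * A.card ≤ k
  obtain ⟨A, hA, hmax⟩ := Finset.exists_max_image (Finset.univ.filter P) Finset.card
    ⟨∅, by simpa [P] using hk⟩
  replace hA : P A := by simpa using hA
  have hmax : ∀ B, P B → B.card ≤ A.card := fun B hB => hmax B (by simpa using hB)
  -- a maximum matching
  obtain ⟨f₀, hf₀, hm⟩ := Finset.exists_max_image (Finset.univ.filter (IsM H A))
    (fun f => (msupp f).card) ⟨id, by simp [IsM]⟩
  replace hf₀ : IsM H A f₀ := by simpa using hf₀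
  have hm : ∀ f, IsM H A f → (msupp f).card ≤ (msupp f₀).card := fun B hB => hm B (by simpa using hB)
  obtain ⟨K, hK⟩ : ∃ K, K = (msupp f₀).card := ⟨_, rfl⟩
  rw [← hK] at hm
  have hmiss : ∀ v, ∃ f, IsM H A f ∧ (msupp f).card = K ∧ f v = v := by
    intro v
    by_contra hno
    push Not at hno
    have hvA : v ∉ A := by
      intro hv
      by_cases h : f₀ v = v
      · exact hno f₀ hf₀ hK.symm h
      · exact (hf₀.2 v h).2 hv
    have : P (insert v A) := by
      intro f hf
      have hf' : IsM H A f := ⟨hf.1, fun x hx => ⟨(hf.2 x hx).1, fun h => (hf.2 x hx).2 (by simp [h])⟩⟩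
      have fv : f v = v := by
        by_contra h
        exact (hf.2 v h).2 (by simp)
      have h1 := hm f hf'
      have h2 : (msupp f).card ≠ K := fun h => hno f hf' h fv
      have h3 := msupp_even f hf.1
      have h4 := msupp_even f₀ hf₀.1
      have h5 := hA f₀ hf₀
      rw [Finset.card_insert_of_notMem hvA]
      omega
    have := hmax _ this
    rw [Finset.card_insert_of_notMem hvA] at this
    omega
  let S : Setoid V :=
    { r := fun u w => ∀ f, IsM H A f → (msupp f).card = K → f u = u → f w = w → u = w
      iseqv := by
        refine ⟨fun _ _ _ _ _ _ => rfl, fun h f a b c d => (h f a b d c).symm, ?_⟩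
        intro u v w huv hvw g hg gk gu gw
        by_contra huw
        by_cases h1 : u = v
        · subst h1; exact huw (hvw g hg gk gu gw)
        by_cases h2 : v = w
        · subst h2; exact huw (huv g hg gk gu gw)
        obtain ⟨f, hf, fk, fv⟩ := hmiss v
        refine gallai_step hm hg gk huw gu gw (v := v) ?_ (Fintype.card V) f hf fk fv (by omega)
        intro h hh hk hv
        exact ⟨fun hu => h1 (huv h hh hk hu hv), fun hw => h2 (hvw h hh hk hv hw)⟩ }
  refine ⟨A, fun x => (Quotient.mk S x).out, ?_, ?_⟩
  · intro x y hxy hx hy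
    have : Quotient.mk S x = Quotient.mk S y := by
      apply Quotient.sound
      intro f hf fk fx fy
      obtain ⟨h, hh, hlt⟩ := isM_add hf hxy hx hy fx fy
      have := hm h hh
      omega
    simp only [this]
  · have h1 : ((msupp f₀)ᶜ).card ≤ (Finset.univ.image (fun x => (Quotient.mk S x).out)).card := by
      apply Finset.card_le_card_of_injOn (fun x => (Quotient.mk S x).out)
      · intro x _; simp
      · intro x hx y hy hxy
        have h := Quotient.exact (Quotient.out_injective hxy)
        simp [msupp] at hx hy
        exact h f₀ hf₀ hK.symm hx hy
    have h2 := Finset.card_compl_add_card (msupp f₀)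
    have h3 := hA f₀ hf₀
    omega

open Classical in
theorem isM_to_subgraph {V : Type*} [Fintype V] (G : SimpleGraph V) {r : ℕ} (c : Sym2 V → Fin r)
    (i : Fin r) (H : SimpleGraph V) (hH : ∀ x y, H.Adj x y → G.Adj x y ∧ c s(x, y) = i)
    (f : V → V) (hf : IsM H ∅ f) :
    ∃ M : G.Subgraph, M.IsMatching ∧ (∀ e ∈ M.edgeSet, c e = i) ∧
      (msupp f).card ≤ 2 * M.edgeSet.ncard := by
  obtain ⟨h1, h2⟩ := hf
  let M : G.Subgraph :=
    { verts := {x | f x ≠ x}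
      Adj := fun a b => f a ≠ a ∧ f a = b
      adj_sub := by
        rintro a b ⟨h, rfl⟩
        exact (hH _ _ (h2 a h).1).1
      edge_vert := by rintro a b ⟨h, _⟩; exact h
      symm := ⟨by rintro a b ⟨h, rfl⟩; exact ⟨by rw [h1]; exact h.symm, h1 a⟩⟩ }
  refine ⟨M, ?_, ?_, ?_⟩
  · intro a ha
    exact ⟨f a, ⟨ha, rfl⟩, fun b hb => hb.2.symm⟩
  · intro e
    induction e with
    | h a b =>
      rintro ⟨h, h'⟩
      dsimp only at h h'
      subst h'
      exact (hH _ _ (h2 a h).1).2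
  · have e : M.edgeSet = ((msupp f).image (fun x => s(x, f x)) : Finset (Sym2 V)) := by
      ext e
      induction e with
      | h a b =>
        simp only [Finset.coe_image, Set.mem_image, Finset.mem_coe, msupp, Finset.mem_filter, Finset.mem_univ, true_and]
        constructor
        · rintro ⟨h, h'⟩
          dsimp only at h h'
          subst h'
          exact ⟨a, h, rfl⟩
        · rintro ⟨x, hx, hxe⟩
          rw [← hxe]; exact ⟨hx, rfl⟩
    rw [e, Set.ncard_coe_finset]
    apply Finset.card_le_mul_card_image
    intro e he
    obtain ⟨x, hx, rfl⟩ := Finset.mem_image.1 he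
    refine (Finset.card_le_card (t := {x, f x}) ?_).trans Finset.card_le_two
    intro y hy
    simp only [Finset.mem_filter, Sym2.eq_iff] at hy
    simp only [Finset.mem_insert, Finset.mem_singleton]
    tauto

open Classical in
theorem avg_lemma {V : Type*} (C D : Finset V) (hC : C.Nonempty) (P : V → V → Prop) :
    ∃ w ∈ C, C.card * (D.filter (fun y => P w y)).card ≤
      ((C ×ˢ D).filter (fun p => P p.1 p.2)).card := by
  by_contra hno
  push Not at hno
  have h : ((C ×ˢ D).filter (fun p => P p.1 p.2)).card = ∑ w ∈ C, (D.filter (fun y => P w y)).card := by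
    rw [Finset.card_filter, Finset.sum_product]
    simp only [Finset.card_filter]
  have h2 := Finset.sum_lt_sum_of_nonempty hC hno
  rw [← Finset.mul_sum, ← h, Finset.sum_const, smul_eq_mul] at h2
  exact lt_irrefl _ h2

open Classical in
theorem pairs_lemma {V : Type*} (U : Finset V) (κ : V → V) (t : ℕ)
    (ht : ∀ x ∈ U, (U.filter (fun y => κ y = κ x)).card ≤ t) :
    (U.offDiag.filter (fun p => κ p.1 = κ p.2)).card + t * (U.image κ).card ≤ t * U.card := by
  have h1 : (U.offDiag.filter (fun p => κ p.1 = κ p.2)).card =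
      ∑ b ∈ U.image κ, ((U.offDiag.filter (fun p => κ p.1 = κ p.2)).filter (fun p => κ p.1 = b)).card := by
    apply Finset.card_eq_sum_card_fiberwise
    intro p hp
    simp only [Finset.coe_filter, Finset.mem_offDiag, Set.mem_ofPred_eq] at hp
    exact Finset.mem_coe.2 (Finset.mem_image_of_mem _ hp.1.1)
  have h2 : U.card = ∑ b ∈ U.image κ, (U.filter (fun p => κ p = b)).card := by
    apply Finset.card_eq_sum_card_fiberwise
    intro p hp
    exact Finset.mem_coe.2 (Finset.mem_image_of_mem _ hp)
  rw [h1, h2, Finset.mul_sum, mul_comm t, ← smul_eq_mul (a := (U.image κ).card), ← Finset.sum_const, ← Finset.sum_add_distrib]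
  apply Finset.sum_le_sum
  intro b hb
  obtain ⟨x, hx, rfl⟩ := Finset.mem_image.1 hb
  have h3 : ((U.offDiag.filter (fun p => κ p.1 = κ p.2)).filter (fun p => κ p.1 = κ x)) ⊆
      (U.filter (fun p => κ p = κ x)).offDiag := by
    intro p
    simp only [Finset.mem_filter, Finset.mem_offDiag]
    rintro ⟨⟨⟨a, b, c⟩, d⟩, e⟩
    exact ⟨⟨a, e⟩, ⟨b, d ▸ e⟩, c⟩
  have h4 := Finset.card_le_card h3
  rw [Finset.offDiag_card] at h4
  have h5 := ht x hx
  have h6 : 0 < (U.filter (fun p => κ p = κ x)).card := Finset.card_pos.2 ⟨x, by simp [hx]⟩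
  generalize (U.filter (fun p => κ p = κ x)).card = a at *
  obtain ⟨a, rfl⟩ : ∃ a', a = a' + 1 := ⟨a - 1, by omega⟩
  have : (a + 1) * (a + 1) - (a + 1) = (a + 1) * a := by
    rw [Nat.mul_succ]; omega
  nlinarith

open Classical in
theorem star_lemma {V : Type*} (G : SimpleGraph V) {r : ℕ} (c : Sym2 V → Fin r)
    (U C : Finset V) (hCU : C ⊆ U) (κ : Fin r → V → V)
    (hκ : ∀ i, ∀ x ∈ U, ∀ y ∈ U, G.Adj x y → c s(x, y) = i → κ i x = κ i y)
    (j : Fin r) (hj : ∀ x ∈ C, ∀ y ∈ U \ C, κ j x ≠ κ j y) (v w : V) (hv : v ∈ U \ C) (hw : w ∈ C) :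
    (C.filter (fun x => G.Adj v x)).card + ((U \ C).filter (fun y => G.Adj w y)).card
      + ∑ i ∈ Finset.univ.erase j, ((U.image (κ i)).card) ≤
      ∑ i ∈ Finset.univ.erase j, U.card + 1 := by
  have hvU : v ∈ U := (Finset.mem_sdiff.1 hv).1
  have hvC : v ∉ C := (Finset.mem_sdiff.1 hv).2
  have e1 : (C.filter (fun x => G.Adj v x)).card = ∑ i ∈ Finset.univ.erase j,
      ((C.filter (fun x => G.Adj v x)).filter (fun x => c s(v, x) = i)).card := by
    apply Finset.card_eq_sum_card_fiberwise
    intro x hx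
    simp only [Finset.coe_filter, Set.mem_ofPred_eq] at hx
    simp only [Finset.coe_erase, Finset.coe_univ, Set.mem_sdiff, Set.mem_univ, true_and, Set.mem_singleton_iff]
    intro h
    exact hj x hx.1 v hv (hκ j v hvU x (hCU hx.1) hx.2 h).symm
  have e2 : (((U \ C).filter (fun y => G.Adj w y)).erase v).card = ∑ i ∈ Finset.univ.erase j,
      ((((U \ C).filter (fun y => G.Adj w y)).erase v).filter (fun x => c s(w, x) = i)).card := by
    apply Finset.card_eq_sum_card_fiberwise
    intro x hx
    simp only [Finset.mem_coe, Finset.mem_erase, Finset.mem_filter] at hx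
    simp only [Finset.coe_erase, Finset.coe_univ, Set.mem_sdiff, Set.mem_univ, true_and, Set.mem_singleton_iff]
    intro h
    exact hj w hw x hx.2.1 (hκ j w (hCU hw) x (Finset.mem_sdiff.1 hx.2.1).1 hx.2.2 h)
  have e3 := Finset.pred_card_le_card_erase (s := (U \ C).filter (fun y => G.Adj w y)) (a := v)
  have key : ∀ i ∈ Finset.univ.erase j,
      ((C.filter (fun x => G.Adj v x)).filter (fun x => c s(v, x) = i)).card +
      ((((U \ C).filter (fun y => G.Adj w y)).erase v).filter (fun x => c s(w, x) = i)).card +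
      (U.image (κ i)).card ≤ U.card := by
    intro i _
    set S := (C.filter (fun x => G.Adj v x)).filter (fun x => c s(v, x) = i) with hS
    set T := (((U \ C).filter (fun y => G.Adj w y)).erase v).filter (fun x => c s(w, x) = i) with hT
    have mS : ∀ x, x ∈ S ↔ (x ∈ C ∧ G.Adj v x) ∧ c s(v, x) = i := by intro x; simp [hS]
    have mT : ∀ x, x ∈ T ↔ (x ≠ v ∧ (x ∈ U ∧ x ∉ C) ∧ G.Adj w x) ∧ c s(w, x) = i := by intro x; simp [hT]
    have hdis : Disjoint S T := by
      rw [Finset.disjoint_left]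
      intro x h1 h2
      rw [mS] at h1; rw [mT] at h2
      exact h2.1.2.1.2 h1.1.1
    have hsub : S ∪ T ⊆ U := by
      intro x hx
      rcases Finset.mem_union.1 hx with h | h
      · exact hCU ((mS x).1 h).1.1
      · exact ((mT x).1 h).1.2.1.1
    have hvR : v ∈ U \ (S ∪ T) := by
      simp only [Finset.mem_sdiff, Finset.mem_union, mS, mT]
      tauto
    have him : U.image (κ i) ⊆ (U \ (S ∪ T)).image (κ i) := by
      have hSv : ∀ x ∈ S, κ i x = κ i v := by
        intro x hx
        have h := (mS x).1 hx
        exact (hκ i v hvU x (hCU h.1.1) h.1.2 h.2).symm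
      intro b hb
      obtain ⟨x, hx, rfl⟩ := Finset.mem_image.1 hb
      by_cases h1 : x ∈ S
      · rw [hSv x h1]; exact Finset.mem_image_of_mem _ hvR
      by_cases h2 : x ∈ T
      · have h := (mT x).1 h2
        rw [← hκ i w (hCU hw) x hx h.1.2.2 h.2]
        by_cases h3 : w ∈ S
        · rw [hSv w h3]; exact Finset.mem_image_of_mem _ hvR
        · apply Finset.mem_image_of_mem
          simp only [Finset.mem_sdiff, Finset.mem_union, not_or]
          exact ⟨hCU hw, h3, fun h4 => ((mT w).1 h4).1.2.1.2 hw⟩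
      · apply Finset.mem_image_of_mem
        simp [hx, h1, h2]
    have h1 := (Finset.card_le_card him).trans Finset.card_image_le
    have h2 := Finset.card_sdiff_add_card_eq_card hsub
    rw [Finset.card_union_of_disjoint hdis] at h2
    omega
  have h := Finset.sum_le_sum key
  rw [Finset.sum_add_distrib, Finset.sum_add_distrib, ← e1, ← e2] at h
  omega

theorem final_ineq (t u d q α β : ℝ) (hd : 0 ≤ d) (hu : d < u) (htu : u ≤ t)
    (h1 : t * α ≤ q) (h2 : u * β ≤ q) (h3 : 2 * q ≤ d * (t + u)) :
    α + β ≤ t - u + 2 * d := by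
  have hu0 : 0 < u := by linarith
  have ht0 : 0 < t := by linarith
  have hut : 0 < u * t := by positivity
  have a1 : u * t * (α + β) ≤ q * (u + t) := by
    have := mul_le_mul_of_nonneg_left h1 hu0.le
    have := mul_le_mul_of_nonneg_left h2 ht0.le
    nlinarith
  have a2 : 2 * q * (u + t) ≤ d * (t + u) * (u + t) := mul_le_mul_of_nonneg_right h3 (by linarith)
  have a3 : d * (t - u) ^ 2 ≤ 2 * (u * t) * (t - u) := by
    have b1 : d * (t - u) ≤ u * t := by
      apply mul_le_mul hu.le (by linarith) (by linarith) hu0.le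
    have b2 := mul_le_mul_of_nonneg_right b1 (sub_nonneg.2 htu)
    have b3 : 0 ≤ u * t * (t - u) := mul_nonneg hut.le (sub_nonneg.2 htu)
    nlinarith
  refine le_of_mul_le_mul_left ?_ hut
  nlinarith

open Classical in
theorem core_lemma {V : Type*} (G : SimpleGraph V) {r : ℕ} (hr : 0 < r) (c : Sym2 V → Fin r)
    (U : Finset V) (hU : U.Nonempty) (κ : Fin r → V → V)
    (hκ : ∀ i, ∀ x ∈ U, ∀ y ∈ U, G.Adj x y → c s(x, y) = i → κ i x = κ i y)
    (d : ℝ) (hd : 0 ≤ d)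
    (hN : ((U.offDiag.filter (fun p => ¬ G.Adj p.1 p.2)).card : ℝ) ≤ d * U.card) :
    ∃ j, 2 * ((U.card : ℝ) - d) - 5 ≤ ∑ i, ((U.card : ℝ) - (U.image (κ i)).card) +
      ((U.card : ℝ) - (U.image (κ j)).card) := by
  have hρ : ∀ i, 0 ≤ ((U.card : ℝ) - (U.image (κ i)).card) := by
    intro i
    have : ((U.image (κ i)).card : ℝ) ≤ U.card := by exact_mod_cast Finset.card_image_le
    linarith
  haveI : Nonempty (Fin r) := ⟨⟨0, hr⟩⟩
  obtain ⟨⟨j, x₀⟩, hx₀, hmax⟩ := Finset.exists_max_image ((Finset.univ : Finset (Fin r)) ×ˢ U)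
    (fun p => (U.filter (fun y => κ p.1 y = κ p.1 p.2)).card)
    (Finset.Nonempty.product Finset.univ_nonempty hU)
  have hx₀U : x₀ ∈ U := (Finset.mem_product.1 hx₀).2
  refine ⟨j, ?_⟩
  set C := U.filter (fun y => κ j y = κ j x₀) with hC
  have hmax : ∀ i, ∀ x ∈ U, (U.filter (fun y => κ i y = κ i x)).card ≤ C.card := by
    intro i x hx
    exact hmax (i, x) (by simp [hx])
  have hCU : C ⊆ U := Finset.filter_subset _ _
  have hx₀C : x₀ ∈ C := by simp [hC, hx₀U]
  have hm0 : (0 : ℝ) < U.card := by exact_mod_cast Finset.card_pos.2 hU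
  by_cases hcase : 2 * C.card ≤ U.card
  · -- small classes
    have h1 : U.card * U.card - U.card ≤ (U.offDiag.filter (fun p => ¬ G.Adj p.1 p.2)).card +
        ∑ i, (U.offDiag.filter (fun p => κ i p.1 = κ i p.2)).card := by
      rw [← Finset.offDiag_card]
      refine le_trans (Finset.card_le_card (t := (U.offDiag.filter (fun p => ¬ G.Adj p.1 p.2)) ∪
        Finset.univ.biUnion (fun i => U.offDiag.filter (fun p => κ i p.1 = κ i p.2))) ?_) ?_
      · intro p hp
        simp only [Finset.mem_union, Finset.mem_filter, Finset.mem_biUnion, Finset.mem_univ, true_and]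
        by_cases h : G.Adj p.1 p.2
        · right
          have hp' := Finset.mem_offDiag.1 hp
          exact ⟨c s(p.1, p.2), hp, hκ _ _ hp'.1 _ hp'.2.1 h rfl⟩
        · exact Or.inl ⟨hp, h⟩
      · exact (Finset.card_union_le _ _).trans (Nat.add_le_add_left Finset.card_biUnion_le _)
    have h1' : (U.card : ℝ) * U.card - U.card ≤ d * U.card +
        ∑ i, ((U.offDiag.filter (fun p => κ i p.1 = κ i p.2)).card : ℝ) := by
      have : ((U.card * U.card : ℕ) : ℝ) ≤ ((U.offDiag.filter (fun p => ¬ G.Adj p.1 p.2)).card +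
        ∑ i, (U.offDiag.filter (fun p => κ i p.1 = κ i p.2)).card + U.card : ℕ) := by
        exact_mod_cast Nat.sub_le_iff_le_add.1 h1
      push_cast at this
      linarith
    have h2 : ∑ i, ((U.offDiag.filter (fun p => κ i p.1 = κ i p.2)).card : ℝ) ≤
        ∑ i, (U.card : ℝ) / 2 * ((U.card : ℝ) - (U.image (κ i)).card) := by
      apply Finset.sum_le_sum
      intro i _
      have h3 := pairs_lemma U (κ i) C.card (hmax i)
      have h3' : ((U.offDiag.filter (fun p => κ i p.1 = κ i p.2)).card : ℝ) + C.card * (U.image (κ i)).card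
        ≤ C.card * U.card := by exact_mod_cast h3
      have h4 : (C.card : ℝ) ≤ U.card / 2 := by
        have : (2 * C.card : ℝ) ≤ U.card := by exact_mod_cast hcase
        linarith
      have h5 := mul_le_mul_of_nonneg_right h4 (hρ i)
      linarith
    rw [← Finset.mul_sum] at h2
    have h6 := hρ j
    have h7 : 2 * ((U.card : ℝ) - 1 - d) ≤ ∑ i, ((U.card : ℝ) - (U.image (κ i)).card) := by
      refine le_of_mul_le_mul_left ?_ hm0
      linarith
    linarith
  · push Not at hcase
    have hsplit := Finset.card_sdiff_add_card_eq_card hCU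
    have hsplit' : ((U \ C).card : ℝ) + C.card = U.card := by exact_mod_cast hsplit
    have hρj : (C.card : ℝ) - 1 ≤ (U.card : ℝ) - (U.image (κ j)).card := by
      have : U.image (κ j) ⊆ insert (κ j x₀) ((U \ C).image (κ j)) := by
        intro b hb
        obtain ⟨x, hx, rfl⟩ := Finset.mem_image.1 hb
        by_cases h : κ j x = κ j x₀
        · simp [h]
        · apply Finset.mem_insert_of_mem
          apply Finset.mem_image_of_mem
          simp [hC, hx, h]
      have h1 := (Finset.card_le_card this).trans (Finset.card_insert_le _ _)
      have h2 := Finset.card_image_le (s := U \ C) (f := κ j)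
      have h3 : (U.image (κ j)).card ≤ (U \ C).card + 1 := by omega
      have h3' : ((U.image (κ j)).card : ℝ) ≤ (U \ C).card + 1 := by exact_mod_cast h3
      linarith
    rw [← Finset.add_sum_erase _ _ (Finset.mem_univ j)]
    by_cases hu : ((U \ C).card : ℝ) ≤ d
    · have : 0 ≤ ∑ i ∈ Finset.univ.erase j, ((U.card : ℝ) - (U.image (κ i)).card) :=
        Finset.sum_nonneg (fun i _ => hρ i)
      linarith
    · push Not at hu
      have hDne : (U \ C).Nonempty := by
        rw [← Finset.card_pos]
        have : (0 : ℝ) < (U \ C).card := by linarith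
        exact_mod_cast this
      obtain ⟨w, hw, hwq⟩ := avg_lemma C (U \ C) ⟨x₀, hx₀C⟩ (fun x y => ¬ G.Adj x y)
      obtain ⟨v, hv, hvq⟩ := avg_lemma (U \ C) C hDne (fun x y => ¬ G.Adj x y)
      have hq : (((U \ C) ×ˢ C).filter (fun p => ¬ G.Adj p.1 p.2)).card =
          ((C ×ˢ (U \ C)).filter (fun p => ¬ G.Adj p.1 p.2)).card := by
        apply Finset.card_equiv (Equiv.prodComm V V)
        rintro ⟨a, b⟩
        simp only [Finset.mem_filter, Finset.mem_product, Equiv.prodComm_apply, Prod.swap_prod_mk, G.adj_comm a b]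
        tauto
      have hqq : 2 * ((C ×ˢ (U \ C)).filter (fun p => ¬ G.Adj p.1 p.2)).card ≤
          (U.offDiag.filter (fun p => ¬ G.Adj p.1 p.2)).card := by
        rw [two_mul]
        nth_rewrite 1 [← hq]
        rw [← Finset.card_union_of_disjoint]
        · apply Finset.card_le_card
          rintro ⟨a, b⟩
          simp only [Finset.mem_union, Finset.mem_filter, Finset.mem_product, Finset.mem_offDiag, Finset.mem_sdiff]
          rintro (⟨⟨⟨h1, h2⟩, h3⟩, h4⟩ | ⟨⟨h3, ⟨h1, h2⟩⟩, h4⟩)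
          · exact ⟨⟨h1, hCU h3, fun e => h2 (e ▸ h3)⟩, h4⟩
          · exact ⟨⟨hCU h3, h1, fun e => h2 (e ▸ h3)⟩, h4⟩
        · rw [Finset.disjoint_left]
          rintro ⟨a, b⟩
          simp only [Finset.mem_filter, Finset.mem_product, Finset.mem_sdiff]
          tauto
      replace hvq : (U \ C).card * (C.filter (fun y => ¬ G.Adj v y)).card ≤
          ((C ×ˢ (U \ C)).filter (fun p => ¬ G.Adj p.1 p.2)).card := by
        rw [← hq]; convert hvq
      replace hwq : C.card * ((U \ C).filter (fun y => ¬ G.Adj w y)).card ≤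
          ((C ×ˢ (U \ C)).filter (fun p => ¬ G.Adj p.1 p.2)).card := by
        convert hwq
      have hstar := star_lemma G c U C hCU κ hκ j (by
        intro x hx y hy he
        simp only [hC, Finset.mem_filter, Finset.mem_sdiff] at hx hy
        exact hy.2 ⟨hy.1, he.symm.trans hx.2⟩) v w hv hw
      have s1 := Finset.card_filter_add_card_filter_not (s := C) (fun x => G.Adj v x)
      have s2 := Finset.card_filter_add_card_filter_not (s := U \ C) (fun x => G.Adj w x)
      have s1' : ((C.filter (fun x => G.Adj v x)).card : ℝ) + (C.filter (fun x => ¬ G.Adj v x)).card = C.card := by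
        exact_mod_cast s1
      have s2' : (((U \ C).filter (fun x => G.Adj w x)).card : ℝ) + ((U \ C).filter (fun x => ¬ G.Adj w x)).card = (U \ C).card := by
        exact_mod_cast s2
      have hstar' : ((C.filter (fun x => G.Adj v x)).card : ℝ) + ((U \ C).filter (fun y => G.Adj w y)).card
          + ∑ i ∈ Finset.univ.erase j, ((U.image (κ i)).card : ℝ) ≤
          ∑ i ∈ Finset.univ.erase j, (U.card : ℝ) + 1 := by exact_mod_cast hstar
      have hf := final_ineq C.card (U \ C).card d
        ((C ×ˢ (U \ C)).filter (fun p => ¬ G.Adj p.1 p.2)).card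
        ((U \ C).filter (fun x => ¬ G.Adj w x)).card (C.filter (fun x => ¬ G.Adj v x)).card
        hd hu (by
          have : (U \ C).card ≤ C.card := by omega
          exact_mod_cast this) (by exact_mod_cast hwq) (by exact_mod_cast hvq) (by
          have : (2 : ℝ) * ((C ×ˢ (U \ C)).filter (fun p => ¬ G.Adj p.1 p.2)).card ≤
            (U.offDiag.filter (fun p => ¬ G.Adj p.1 p.2)).card := by exact_mod_cast hqq
          rw [add_comm (C.card : ℝ), hsplit']
          linarith)
      rw [Finset.sum_sub_distrib]
      linarith

open Classical in
theorem nonadj_count {V : Type*} [Fintype V] (G : SimpleGraph V) :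
    ((Finset.univ : Finset V).offDiag.filter (fun p => ¬ G.Adj p.1 p.2)).card + 2 * G.edgeSet.ncard
      = 2 * (Fintype.card V).choose 2 := by
  have h1 : ((Finset.univ : Finset V).offDiag.filter (fun p => G.Adj p.1 p.2)).card = 2 * G.edgeSet.ncard := by
    rw [← SimpleGraph.coe_edgeFinset, Set.ncard_coe_finset, ← SimpleGraph.sum_degrees_eq_twice_card_edges]
    have : ((Finset.univ : Finset V).offDiag.filter (fun p => G.Adj p.1 p.2)) =
        ((Finset.univ ×ˢ Finset.univ : Finset (V × V)).filter (fun p => G.Adj p.1 p.2)) := by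
      ext ⟨a, b⟩
      simp only [Finset.mem_filter, Finset.mem_offDiag, Finset.mem_product, Finset.mem_univ, true_and]
      exact ⟨fun h => h.2, fun h => ⟨h.ne, h⟩⟩
    rw [this, Finset.card_filter, Finset.sum_product]
    apply Finset.sum_congr rfl
    intro x _
    rw [← Finset.card_filter, ← SimpleGraph.card_neighborFinset_eq_degree, SimpleGraph.neighborFinset_eq_filter]
  have h2 := Finset.card_filter_add_card_filter_not (s := (Finset.univ : Finset V).offDiag) (fun p => G.Adj p.1 p.2)
  rw [Finset.offDiag_card, Finset.card_univ] at h2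
  have h3 := Nat.choose_two_right (Fintype.card V)
  have h4 := Nat.even_mul_pred_self (Fintype.card V)
  rw [Nat.mul_sub_one] at h3 h4
  obtain ⟨k, hk⟩ := h4
  omega

/-- **Corollary (monochromatic matchings in almost complete graphs).**
Let `r ≥ 2`, `0 ≤ δ ≤ 1/(2(r+1))`, and let `G` be a graph on `n` vertices with at
least `(1−δ)·C(n,2)` edges. Then in every `r`-colouring of the edges of `G` there
is a monochromatic matching of size at least `⌊(1/(r+1) − δ)·n⌋`. -/
theorem monochromatic_matching_almost_complete
    {V : Type*} [Fintype V] (G : SimpleGraph V) (n : ℕ) (hn : Fintype.card V = n)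
    (r : ℕ) (hr : 2 ≤ r)
    (δ : ℝ) (hδ0 : 0 ≤ δ) (hδ1 : δ ≤ 1 / (2 * (r + 1)))
    (hedges : (1 - δ) * (n.choose 2 : ℝ) ≤ (G.edgeSet.ncard : ℝ)) :
    ∀ c : Sym2 V → Fin r, ∃ i : Fin r, ∃ M : G.Subgraph,
      M.IsMatching ∧ (∀ e ∈ M.edgeSet, c e = i) ∧
      ⌊(1 / (r + 1 : ℝ) - δ) * n⌋ ≤ (M.edgeSet.ncard : ℤ) := by
  classical
  intro c
  by_contra hno
  push Not at hno
  obtain ⟨L, hL⟩ : ∃ L, L = ⌊(1 / (r + 1 : ℝ) - δ) * n⌋ := ⟨_, rfl⟩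
  rw [← hL] at hno
  have hLle : (L : ℝ) ≤ (1 / (r + 1 : ℝ) - δ) * n := by rw [hL]; exact Int.floor_le _
  let H : Fin r → SimpleGraph V := fun i =>
    { Adj := fun x y => G.Adj x y ∧ c s(x, y) = i
      symm := ⟨fun x y h => ⟨h.1.symm, by rw [Sym2.eq_swap]; exact h.2⟩⟩
      loopless := ⟨fun x h => G.loopless.irrefl x h.1⟩ }
  have hbound : ∀ i, ∀ f, IsM (H i) ∅ f → ((msupp f).card : ℤ) ≤ 2 * (L - 1) := by
    intro i f hf
    obtain ⟨M, hM, hMc, hcard⟩ := isM_to_subgraph G c i (H i) (fun x y h => h) f hf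
    have := hno i M hM hMc
    omega
  have hL1 : 0 ≤ 2 * (L - 1) := by
    have := hbound ⟨0, by omega⟩ id ⟨fun _ => rfl, fun x hx => absurd rfl hx⟩
    omega
  obtain ⟨k, hk⟩ := Int.eq_ofNat_of_zero_le hL1
  have hTB := fun i => tutte_berge_weak (H i) k (fun f hf => by
    have := hbound i f hf
    omega)
  choose A κ hAκ hcard using hTB
  obtain ⟨U, hUdef⟩ : ∃ U, U = (Finset.univ.biUnion A)ᶜ := ⟨_, rfl⟩
  have hUA : ∀ i, ∀ x ∈ U, x ∉ A i := by
    intro i x hx h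
    simp only [hUdef, Finset.mem_compl, Finset.mem_biUnion, Finset.mem_univ, true_and, not_exists] at hx
    exact hx i h
  have hkR : (k : ℝ) = 2 * ((L : ℝ) - 1) := by exact_mod_cast hk.symm
  have hrow : ∀ i, 2 * ((A i).card : ℝ) + ((U.card : ℝ) - (U.image (κ i)).card) ≤ k := by
    intro i
    have h1 := hcard i
    have h2 : (Finset.univ.image (κ i)).card ≤ (U.image (κ i)).card + Uᶜ.card := by
      rw [← Finset.union_compl U, Finset.image_union]
      exact (Finset.card_union_le _ _).trans (Nat.add_le_add_left Finset.card_image_le _)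
    have h3 := Finset.card_add_card_compl U
    have h4 : 2 * (A i).card + U.card ≤ k + (U.image (κ i)).card := by omega
    have h4' : 2 * ((A i).card : ℝ) + U.card ≤ k + (U.image (κ i)).card := by exact_mod_cast h4
    linarith
  have hρ : ∀ i, 0 ≤ ((U.card : ℝ) - (U.image (κ i)).card) := by
    intro i
    have : ((U.image (κ i)).card : ℝ) ≤ U.card := by exact_mod_cast Finset.card_image_le
    linarith
  have hUn : (n : ℝ) ≤ U.card + ∑ i, ((A i).card : ℝ) := by
    have h1 := Finset.card_add_card_compl U
    have h2 : Uᶜ.card ≤ ∑ i, (A i).card := by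
      rw [hUdef, compl_compl]; exact Finset.card_biUnion_le
    have : n ≤ U.card + ∑ i, (A i).card := by omega
    exact_mod_cast this
  obtain ⟨d, hd⟩ : ∃ d : ℝ, d = (r + 1) * δ * n := ⟨_, rfl⟩
  have hr0 : (0 : ℝ) < r + 1 := by positivity
  have hr2 : (2 : ℝ) ≤ r := by exact_mod_cast hr
  have hd0 : 0 ≤ d := by rw [hd]; positivity
  have hLr : (r + 1) * (L : ℝ) ≤ n - d := by
    have h := mul_le_mul_of_nonneg_left hLle hr0.le
    have e : ((r : ℝ) + 1) * ((1 / (r + 1 : ℝ) - δ) * n) = n - d := by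
      rw [hd]; field_simp
    linarith
  have hsum : ∑ i, (2 * ((A i).card : ℝ) + ((U.card : ℝ) - (U.image (κ i)).card)) ≤ r * k := by
    refine (Finset.sum_le_sum (fun i _ => hrow i)).trans ?_
    simp
  rw [Finset.sum_add_distrib, ← Finset.mul_sum] at hsum
  have hρs : 0 ≤ ∑ i, ((U.card : ℝ) - (U.image (κ i)).card) := Finset.sum_nonneg (fun i _ => hρ i)
  have hup : ∀ j, ∑ i, ((U.card : ℝ) - (U.image (κ i)).card) +
      ((U.card : ℝ) - (U.image (κ j)).card) ≤ 2 * (U.card - d) - 6 := by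
    intro j
    have h1 := hrow j
    have h2 : (0 : ℝ) ≤ (A j).card := by positivity
    rw [hkR] at h1 hsum
    nlinarith
  have hLnn : (1 : ℝ) ≤ L := by
    have : 1 ≤ L := by omega
    exact_mod_cast this
  have hnU : (n : ℝ) ≤ (r + 1) * U.card := by
    rw [hkR] at hsum
    have h1 : ∑ i, ((A i).card : ℝ) ≤ r * L := by nlinarith
    have h2 : (r + 1) * ∑ i, ((A i).card : ℝ) ≤ (r + 1) * (r * L) := mul_le_mul_of_nonneg_left h1 hr0.le
    have h3 : r * ((r + 1) * (L : ℝ)) ≤ r * (n - d) := mul_le_mul_of_nonneg_left hLr (by linarith)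
    have h4 := mul_le_mul_of_nonneg_left hUn hr0.le
    have h5 : 0 ≤ (r : ℝ) * d := by positivity
    nlinarith
  have hUne : U.Nonempty := by
    rw [← Finset.card_pos]
    have h1 := hup ⟨0, by omega⟩
    have h2 := hρ ⟨0, by omega⟩
    have : (0 : ℝ) < U.card := by linarith
    exact_mod_cast this
  have hN : ((U.offDiag.filter (fun p => ¬ G.Adj p.1 p.2)).card : ℝ) ≤ d * U.card := by
    have h1 : (U.offDiag.filter (fun p => ¬ G.Adj p.1 p.2)).card ≤
        ((Finset.univ : Finset V).offDiag.filter (fun p => ¬ G.Adj p.1 p.2)).card :=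
      Finset.card_le_card (Finset.filter_subset_filter _ (Finset.offDiag_mono (Finset.subset_univ _)))
    have h2 := nonadj_count G
    rw [hn] at h2
    have h1' : ((U.offDiag.filter (fun p => ¬ G.Adj p.1 p.2)).card : ℝ) + 2 * G.edgeSet.ncard ≤ 2 * n.choose 2 := by
      exact_mod_cast (by omega : (U.offDiag.filter (fun p => ¬ G.Adj p.1 p.2)).card + 2 * G.edgeSet.ncard ≤ 2 * n.choose 2)
    have h3 : (n.choose 2 : ℝ) = n * (n - 1) / 2 := Nat.cast_choose_two ℝ n
    have h4 : ((U.offDiag.filter (fun p => ¬ G.Adj p.1 p.2)).card : ℝ) ≤ δ * (n * (n - 1)) := by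
      rw [h3] at h1' hedges
      linarith
    have hδn : 0 ≤ δ * n := by positivity
    have h5 := mul_le_mul_of_nonneg_left hnU hδn
    rw [hd]
    linarith
  obtain ⟨j, hj⟩ := core_lemma G (by omega) c U hUne κ (fun i x hx y hy hxy hc =>
    hAκ i x y ⟨hxy, hc⟩ (hUA i x hx) (hUA i y hy)) d hd0 hN
  have := hup j
  linarith
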